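/- arXiv:1301.0699 — 4 statements merged into one kernel-verified Lean document; each statement's English description precedes it below -/
import Mathlib

section
/- Let p, q > 1 and a ≥ 1. Then sin_{p,q} is (a,a)-concave on (0,1): for all r, s ∈ (0,1), sin_{p,q}(((r^a + s^a)/2)^{1/a}) ≥ ((sin_{p,q}(r)^a + sin_{p,q}(s)^a)/2)^{1/a}. -/
open Real Set

/-- `arcsinPQ p q x = ∫₀ˣ (1 - tᵠ)^(-1/p) dt`, the generalized inverse sine. -/
noncomputable def arcsinPQ (p q x : ℝ) : ℝ := ∫ t in (0:ℝ)..x, (1 - t ^ q) ^ (-(1/p))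

/-- `sinPQ p q` is the inverse function of `arcsinPQ p q` (restricted to `[0,1]`). -/
noncomputable def sinPQ (p q : ℝ) : ℝ → ℝ := Function.invFunOn (arcsinPQ p q) (Set.Icc 0 1)

theorem arcsinPQ_integrand_intervalIntegrable {p q x y : ℝ} (hq : 1 < q)
    (hx : x ∈ Ico (0:ℝ) 1) (hy : y ∈ Ico (0:ℝ) 1) :
    IntervalIntegrable (fun t : ℝ => (1 - t ^ q) ^ (-(1/p))) MeasureTheory.volume x y := by
  apply ContinuousOn.intervalIntegrable
  intro t ht
  have ht0 : 0 ≤ t := (le_min hx.1 hy.1).trans ht.1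
  have ht1 : t < 1 := ht.2.trans_lt (max_lt hx.2 hy.2)
  have hpow : t ^ q < 1 := rpow_lt_one ht0 ht1 (by linarith)
  apply ContinuousAt.continuousWithinAt
  exact (continuousAt_const.sub (continuousAt_id.rpow_const (Or.inr (by linarith)))).rpow_const
    (Or.inl (sub_pos.2 hpow).ne')

theorem arcsinPQ_integrand_mono {p q x y : ℝ} (hp : 1 < p) (hq : 1 < q)
    (hx : 0 ≤ x) (hxy : x ≤ y) (hy : y < 1) :
    (1 - x ^ q) ^ (-(1/p)) ≤ (1 - y ^ q) ^ (-(1/p)) := by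
  have hpow : y ^ q < 1 := rpow_lt_one (hx.trans hxy) hy (by linarith)
  have hle : x ^ q ≤ y ^ q := rpow_le_rpow hx hxy (by linarith)
  apply rpow_le_rpow_of_nonpos (by linarith) (by linarith)
  have : 0 < 1 / p := by positivity
  linarith

theorem arcsinPQ_integrand_zero {p q : ℝ} (hq : 1 < q) :
    (1 - (0:ℝ) ^ q) ^ (-(1/p)) = 1 := by
  rw [zero_rpow (by linarith), sub_zero, one_rpow]

theorem arcsinPQ_zero (p q : ℝ) : arcsinPQ p q 0 = 0 := by
  simp [arcsinPQ]

/-- The graph of `arcsinPQ p q` on `[0, 1)` lies above its tangent lines. -/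
theorem arcsinPQ_tangent_le {p q m u : ℝ} (hp : 1 < p) (hq : 1 < q)
    (hm : m ∈ Ico (0:ℝ) 1) (hu : u ∈ Ico (0:ℝ) 1) :
    arcsinPQ p q m + (1 - m ^ q) ^ (-(1/p)) * (u - m) ≤ arcsinPQ p q u := by
  have h0 : (0:ℝ) ∈ Ico (0:ℝ) 1 := by simp
  rcases le_total m u with h | h
  · have hmono := intervalIntegral.integral_mono_on h
      (intervalIntegrable_const (c := (1 - m ^ q) ^ (-(1/p))))
      (arcsinPQ_integrand_intervalIntegrable (p := p) hq hm hu)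
      (fun t ht => arcsinPQ_integrand_mono hp hq hm.1 ht.1 (ht.2.trans_lt hu.2))
    have hadd := intervalIntegral.integral_add_adjacent_intervals
      (arcsinPQ_integrand_intervalIntegrable (p := p) hq h0 hm)
      (arcsinPQ_integrand_intervalIntegrable (p := p) hq hm hu)
    rw [intervalIntegral.integral_const, smul_eq_mul] at hmono
    simp only [arcsinPQ]
    linarith
  · have hmono := intervalIntegral.integral_mono_on h
      (arcsinPQ_integrand_intervalIntegrable (p := p) hq hu hm)
      (intervalIntegrable_const (c := (1 - m ^ q) ^ (-(1/p))))
      (fun t ht => arcsinPQ_integrand_mono hp hq (hu.1.trans ht.1) ht.2 hm.2)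
    have hadd := intervalIntegral.integral_add_adjacent_intervals
      (arcsinPQ_integrand_intervalIntegrable (p := p) hq h0 hu)
      (arcsinPQ_integrand_intervalIntegrable (p := p) hq hu hm)
    rw [intervalIntegral.integral_const, smul_eq_mul] at hmono
    simp only [arcsinPQ]
    linarith

theorem le_arcsinPQ {p q x : ℝ} (hp : 1 < p) (hq : 1 < q) (hx : x ∈ Ico (0:ℝ) 1) :
    x ≤ arcsinPQ p q x := by
  have h := arcsinPQ_tangent_le hp hq (m := 0) (by simp) hx
  rw [arcsinPQ_integrand_zero hq, arcsinPQ_zero] at h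
  linarith

theorem arcsinPQ_lt_arcsinPQ {p q x y : ℝ} (hp : 1 < p) (hq : 1 < q)
    (hx : 0 ≤ x) (hxy : x < y) (hy : y < 1) : arcsinPQ p q x < arcsinPQ p q y := by
  have h := arcsinPQ_tangent_le hp hq (m := x) ⟨hx, hxy.trans hy⟩ (u := y) ⟨hx.trans hxy.le, hy⟩
  have hpow : x ^ q < 1 := rpow_lt_one hx (hxy.trans hy) (by linarith)
  have : 0 < (1 - x ^ q) ^ (-(1/p)) * (y - x) :=
    mul_pos (rpow_pos_of_pos (by linarith) _) (by linarith)
  linarith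

/-- If the defining integral diverged, `arcsinPQ p q 1` would be `0`; otherwise it is at
least `1`. Either way it is not in `(0, 1)`. -/
theorem arcsinPQ_one_notMem_Ioo {p q : ℝ} (hp : 1 < p) (hq : 1 < q) :
    arcsinPQ p q 1 ∉ Ioo (0:ℝ) 1 := by
  rintro ⟨hpos, hlt⟩
  by_cases hint : IntervalIntegrable (fun t : ℝ => (1 - t ^ q) ^ (-(1/p)))
      MeasureTheory.volume 0 1
  · have hmono := intervalIntegral.integral_mono_on_of_le_Ioo zero_le_one
      (intervalIntegrable_const (c := (1:ℝ))) hint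
      (fun t ht => (arcsinPQ_integrand_zero (p := p) hq).symm.le.trans
        (arcsinPQ_integrand_mono hp hq le_rfl ht.1.le ht.2))
    rw [intervalIntegral.integral_const] at hmono
    simp only [arcsinPQ] at hlt
    norm_num at hmono hlt
    linarith
  · rw [arcsinPQ, intervalIntegral.integral_undef hint] at hpos
    exact hpos.false

theorem sinPQ_spec {p q r : ℝ} (hp : 1 < p) (hq : 1 < q) (hr : r ∈ Ioo (0:ℝ) 1) :
    sinPQ p q r ∈ Ico (0:ℝ) 1 ∧ arcsinPQ p q (sinPQ p q r) = r := by
  have hr' : r ∈ Ico (0:ℝ) 1 := ⟨hr.1.le, hr.2⟩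
  have hcont : ContinuousOn (arcsinPQ p q) (Icc 0 r) := by
    have hint := arcsinPQ_integrand_intervalIntegrable (p := p) hq (x := 0) (by simp) hr'
    rw [intervalIntegrable_iff_integrableOn_Icc_of_le hr.1.le, ← uIcc_of_le hr.1.le] at hint
    rw [← uIcc_of_le hr.1.le]
    exact intervalIntegral.continuousOn_primitive_interval hint
  obtain ⟨x, hx, hxr⟩ := intermediate_value_Icc hr.1.le hcont
    (show r ∈ Icc (arcsinPQ p q 0) (arcsinPQ p q r) from
      ⟨(arcsinPQ_zero p q).trans_le hr.1.le, le_arcsinPQ hp hq hr'⟩)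
  have hex : ∃ x ∈ Icc (0:ℝ) 1, arcsinPQ p q x = r := ⟨x, ⟨hx.1, hx.2.trans hr.2.le⟩, hxr⟩
  have hmem : sinPQ p q r ∈ Icc (0:ℝ) 1 := Function.invFunOn_mem hex
  have heq : arcsinPQ p q (sinPQ p q r) = r := Function.invFunOn_eq hex
  refine ⟨⟨hmem.1, hmem.2.lt_of_ne fun h => ?_⟩, heq⟩
  rw [h] at heq
  exact arcsinPQ_one_notMem_Ioo hp hq (heq ▸ hr)

theorem powerMean_le_powerMean {a x y z w : ℝ} (ha : 0 < a) (hx : 0 ≤ x) (hy : 0 ≤ y)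
    (hxz : x ≤ z) (hyw : y ≤ w) :
    ((x ^ a + y ^ a) / 2) ^ (1/a) ≤ ((z ^ a + w ^ a) / 2) ^ (1/a) := by
  gcongr

theorem powerMean_self {a x : ℝ} (ha : 0 < a) (hx : 0 ≤ x) :
    ((x ^ a + x ^ a) / 2) ^ (1/a) = x := by
  rw [add_self_div_two, one_div, rpow_rpow_inv hx ha.ne']

theorem powerMean_lt {a x y z : ℝ} (ha : 0 < a) (hx : 0 ≤ x) (hy : 0 ≤ y)
    (hxz : x < z) (hyz : y < z) : ((x ^ a + y ^ a) / 2) ^ (1/a) < z := by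
  have hmax : max x y < z := max_lt hxz hyz
  exact (powerMean_le_powerMean ha hx hy (le_max_left x y) (le_max_right x y)).trans_lt
    ((powerMean_self ha (le_max_of_le_left hx)).trans_lt hmax)

theorem powerMean_mul {a c x y : ℝ} (ha : 0 < a) (hc : 0 ≤ c) (hx : 0 ≤ x) (hy : 0 ≤ y) :
    (((c * x) ^ a + (c * y) ^ a) / 2) ^ (1/a) = c * ((x ^ a + y ^ a) / 2) ^ (1/a) := by
  rw [mul_rpow hc hx, mul_rpow hc hy, ← mul_add, mul_div_assoc,
    mul_rpow (rpow_nonneg hc a) (by positivity)]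
  congr 1
  rw [one_div, rpow_rpow_inv hc ha.ne']

/-- Minkowski's inequality for the power mean of two numbers shifted by a constant. -/
theorem powerMean_add_const_le {a x y c : ℝ} (ha : 1 ≤ a) (hx : 0 ≤ x) (hy : 0 ≤ y)
    (hc : 0 ≤ c) :
    (((x + c) ^ a + (y + c) ^ a) / 2) ^ (1/a) ≤ ((x ^ a + y ^ a) / 2) ^ (1/a) + c := by
  have hmink := Real.Lp_add_le_of_nonneg (s := (Finset.univ : Finset (Fin 2)))
    (f := ![x, y]) (g := ![c, c]) ha (by simp [Fin.forall_fin_two, hx, hy])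
    (by simp [Fin.forall_fin_two, hc])
  simp only [Fin.sum_univ_two, Matrix.cons_val_zero, Matrix.cons_val_one] at hmink
  have ha0 : 0 < a := by linarith
  calc (((x + c) ^ a + (y + c) ^ a) / 2) ^ (1/a)
      = ((x + c) ^ a + (y + c) ^ a) ^ (1/a) / 2 ^ (1/a) := div_rpow (by positivity) (by simp) _
    _ ≤ ((x ^ a + y ^ a) ^ (1/a) + (c ^ a + c ^ a) ^ (1/a)) / 2 ^ (1/a) := by gcongr
    _ = ((x ^ a + y ^ a) / 2) ^ (1/a) + c := by
      rw [add_div, ← div_rpow (by positivity) (by simp), ← div_rpow (by positivity) (by simp),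
        powerMean_self ha0 hc]

theorem arcsinPQ_powerMean_le {p q a u v : ℝ} (hp : 1 < p) (hq : 1 < q) (ha : 1 ≤ a)
    (hu : u ∈ Ico (0:ℝ) 1) (hv : v ∈ Ico (0:ℝ) 1) :
    arcsinPQ p q (((u ^ a + v ^ a) / 2) ^ (1/a)) ≤
      ((arcsinPQ p q u ^ a + arcsinPQ p q v ^ a) / 2) ^ (1/a) := by
  have ha0 : 0 < a := by linarith
  have hu0 := hu.1
  have hv0 := hv.1
  set m := ((u ^ a + v ^ a) / 2) ^ (1/a) with hm_def
  have hm : m ∈ Ico (0:ℝ) 1 := ⟨by positivity, powerMean_lt ha0 hu0 hv0 hu.2 hv.2⟩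
  set c := (1 - m ^ q) ^ (-(1/p))
  have hc : 0 ≤ c :=
    rpow_nonneg (sub_nonneg.2 (rpow_le_one hm.1 hm.2.le (by linarith))) _
  have hb := arcsinPQ_tangent_le hp hq hm (u := 0) (by simp)
  rw [arcsinPQ_zero] at hb
  have hmean : c * m ≤ (((arcsinPQ p q u + (c * m - arcsinPQ p q m)) ^ a +
      (arcsinPQ p q v + (c * m - arcsinPQ p q m)) ^ a) / 2) ^ (1/a) := by
    refine (powerMean_mul ha0 hc hu0 hv0).symm.trans_le
      (powerMean_le_powerMean ha0 (by positivity) (by positivity) ?_ ?_)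
    · linarith [arcsinPQ_tangent_le hp hq hm hu]
    · linarith [arcsinPQ_tangent_le hp hq hm hv]
  have hmink := powerMean_add_const_le ha (hu0.trans (le_arcsinPQ hp hq hu))
    (hv0.trans (le_arcsinPQ hp hq hv)) (c := c * m - arcsinPQ p q m) (by linarith)
  linarith

theorem sinPQ_aa_concave (p q a : ℝ) (hp : 1 < p) (hq : 1 < q) (ha : 1 ≤ a)
    (r s : ℝ) (hr : r ∈ Set.Ioo (0:ℝ) 1) (hs : s ∈ Set.Ioo (0:ℝ) 1) :
    sinPQ p q (((r ^ a + s ^ a) / 2) ^ (1/a)) ≥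
      ((sinPQ p q r ^ a + sinPQ p q s ^ a) / 2) ^ (1/a) := by
  have ha0 : 0 < a := by linarith
  have hr0 := hr.1
  have hs0 := hs.1
  obtain ⟨hu, hur⟩ := sinPQ_spec hp hq hr
  obtain ⟨hv, hvs⟩ := sinPQ_spec hp hq hs
  obtain ⟨hx, hxR⟩ := sinPQ_spec hp hq (r := ((r ^ a + s ^ a) / 2) ^ (1/a))
    ⟨by positivity, powerMean_lt ha0 hr0.le hs0.le hr.2 hs.2⟩
  have hle := arcsinPQ_powerMean_le hp hq ha hu hv
  rw [hur, hvs, ← hxR] at hle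
  by_contra! hlt
  exact (arcsinPQ_lt_arcsinPQ hp hq hx.1 hlt
    (powerMean_lt ha0 hu.1 hv.1 hu.2 hv.2)).not_ge hle
end

section
/- Let p, q > 1 and a ≥ 1. Then sinh_{p,q} is (a,a)-convex on (0,1): for all r, s ∈ (0,1), sinh_{p,q}(((r^a + s^a)/2)^{1/a}) ≤ ((sinh_{p,q}(r)^a + sinh_{p,q}(s)^a)/2)^{1/a}. -/
open Real Set

/-- `arsinhPQ p q x = ∫₀ˣ (1 + tᵠ)^(-1/p) dt`, the generalized inverse hyperbolic sine. -/
noncomputable def arsinhPQ (p q x : ℝ) : ℝ := ∫ t in (0:ℝ)..x, (1 + t ^ q) ^ (-(1/p))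

/-- `sinhPQ p q` is the inverse function of `arsinhPQ p q` (restricted to `[0,∞)`). -/
noncomputable def sinhPQ (p q : ℝ) : ℝ → ℝ := Function.invFunOn (arsinhPQ p q) (Set.Ici 0)

lemma arsinhPQ_integrand_continuousOn (p q : ℝ) (hq : 0 < q) :
    ContinuousOn (fun t : ℝ => (1 + t ^ q) ^ (-(1/p))) (Ici 0) := by
  refine ContinuousOn.rpow_const ?_ fun t ht => Or.inl ?_
  · exact (continuous_const.add (Real.continuous_rpow_const hq.le)).continuousOn
  · have := Real.rpow_nonneg (mem_Ici.1 ht) q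
    positivity

lemma arsinhPQ_integrand_intervalIntegrable (p q : ℝ) (hq : 0 < q) {x y : ℝ}
    (hx : 0 ≤ x) (hy : 0 ≤ y) :
    IntervalIntegrable (fun t : ℝ => (1 + t ^ q) ^ (-(1/p))) MeasureTheory.volume x y :=
  ((arsinhPQ_integrand_continuousOn p q hq).mono fun _ ht =>
    (le_inf hx hy).trans ht.1).intervalIntegrable

lemma arsinhPQ_integrand_antitoneOn (p q : ℝ) (hp : 0 < p) (hq : 0 < q) :
    AntitoneOn (fun t : ℝ => (1 + t ^ q) ^ (-(1/p))) (Ici 0) := by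
  intro x hx y hy hxy
  have h1 := Real.rpow_nonneg (mem_Ici.1 hx) q
  have h2 := Real.rpow_le_rpow hx hxy hq.le
  have h3 : 0 < 1 / p := by positivity
  exact Real.rpow_le_rpow_of_nonpos (by linarith) (by linarith) (by linarith)

/-- `arsinhPQ p q` lies below each of its tangent lines on `[0,∞)`. -/
lemma arsinhPQ_le_tangent (p q : ℝ) (hp : 0 < p) (hq : 0 < q) {m x : ℝ}
    (hm : 0 ≤ m) (hx : 0 ≤ x) :
    arsinhPQ p q x ≤ arsinhPQ p q m + (1 + m ^ q) ^ (-(1/p)) * (x - m) := by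
  have hanti := arsinhPQ_integrand_antitoneOn p q hp hq
  have hint := fun {a b : ℝ} (ha : 0 ≤ a) (hb : 0 ≤ b) =>
    arsinhPQ_integrand_intervalIntegrable p q hq ha hb
  have hadd : arsinhPQ p q m + ∫ t in m..x, (1 + t ^ q) ^ (-(1/p)) = arsinhPQ p q x :=
    intervalIntegral.integral_add_adjacent_intervals (hint le_rfl hm) (hint hm hx)
  rcases le_total m x with h | h
  · have := intervalIntegral.integral_mono_on h (hint hm hx)
      (intervalIntegrable_const (c := (1 + m ^ q) ^ (-(1/p))))
      fun t ht => hanti hm (hm.trans ht.1) ht.1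
    rw [intervalIntegral.integral_const, smul_eq_mul] at this
    linarith
  · have := intervalIntegral.integral_mono_on h
      (intervalIntegrable_const (c := (1 + m ^ q) ^ (-(1/p)))) (hint hx hm)
      fun t ht => hanti (hx.trans ht.1) hm ht.2
    rw [intervalIntegral.integral_const, smul_eq_mul,
      intervalIntegral.integral_symm] at this
    linarith

lemma arsinhPQ_zero (p q : ℝ) : arsinhPQ p q 0 = 0 := intervalIntegral.integral_same

lemma arsinhPQ_strictMonoOn (p q : ℝ) (hp : 0 < p) (hq : 0 < q) :
    StrictMonoOn (arsinhPQ p q) (Ici 0) := by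
  intro x hx y hy hxy
  have h := arsinhPQ_le_tangent p q hp hq (mem_Ici.1 hy) hx
  have h1 := Real.rpow_nonneg (mem_Ici.1 hy) q
  have h2 : 0 < (1 + y ^ q) ^ (-(1/p)) := by positivity
  nlinarith

lemma hasDerivAt_mul_one_add_rpow (q : ℝ) (hq : 1 < q) {x : ℝ} (hx : 0 ≤ x) :
    HasDerivAt (fun t : ℝ => t * (1 + t ^ q) ^ (-(1/q))) ((1 + x ^ q) ^ (-(1/q) - 1)) x := by
  have h1 := Real.rpow_nonneg hx q
  have hpos : 0 < 1 + x ^ q := by positivity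
  have h := (hasDerivAt_id x).mul ((((Real.hasDerivAt_rpow_const
    (Or.inr hq.le : x ≠ 0 ∨ 1 ≤ q)).const_add 1)).rpow_const (p := -(1/q)) (Or.inl hpos.ne'))
  refine h.congr_deriv ?_
  have e1 : (1 + x ^ q) ^ (-(1/q)) = (1 + x ^ q) ^ (-(1/q) - 1) * (1 + x ^ q) := by
    rw [← Real.rpow_add_one hpos.ne', sub_add_cancel]
  have e2 : x ^ q = x * x ^ (q - 1) := by
    rw [mul_comm, ← Real.rpow_add_one' hx (by linarith), sub_add_cancel]
  have e3 : q * (1 / q) = 1 := by field_simp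
  simp only [id_eq]
  rw [e1]
  generalize (1 + x ^ q) ^ (-(1/q) - 1) = A
  rw [e2]
  linear_combination (-(x * x ^ (q-1) * A)) * e3

/-- The lower bound `x / (1 + xᵠ)^(1/q) ≤ arsinhPQ p q x`, whose left side tends to `1`. -/
lemma mul_one_add_rpow_le_arsinhPQ (p q : ℝ) (hp : 1 < p) (hq : 1 < q) {x : ℝ} (hx : 0 ≤ x) :
    x * (1 + x ^ q) ^ (-(1/q)) ≤ arsinhPQ p q x := by
  have hq0 : 0 < q := by linarith
  have hint : IntervalIntegrable (fun t : ℝ => (1 + t ^ q) ^ (-(1/q) - 1))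
      MeasureTheory.volume 0 x := by
    refine ContinuousOn.intervalIntegrable (ContinuousOn.rpow_const
      (continuous_const.add (Real.continuous_rpow_const hq0.le)).continuousOn
      fun t ht => Or.inl ?_)
    rw [uIcc_of_le hx] at ht
    have := Real.rpow_nonneg ht.1 q
    positivity
  have h := intervalIntegral.integral_eq_sub_of_hasDerivAt
    (fun t ht => hasDerivAt_mul_one_add_rpow q hq
      (x := t) (by rw [uIcc_of_le hx] at ht; exact ht.1)) hint
  rw [zero_mul, sub_zero] at h
  rw [← h]
  refine intervalIntegral.integral_mono_on hx hint
    (arsinhPQ_integrand_intervalIntegrable p q hq0 le_rfl hx) fun t ht => ?_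
  have := Real.rpow_nonneg ht.1 q
  refine Real.rpow_le_rpow_of_exponent_le (by linarith) ?_
  have h1 : 1 / p < 1 := by rw [div_lt_one] <;> linarith
  have h2 : 0 < 1 / q := by positivity
  linarith

lemma exists_arsinhPQ_eq (p q : ℝ) (hp : 1 < p) (hq : 1 < q) {r : ℝ} (hr : r ∈ Ioo (0:ℝ) 1) :
    ∃ x ∈ Ici (0:ℝ), arsinhPQ p q x = r := by
  have hq0 : 0 < q := by linarith
  have hlt : r ^ q < 1 := Real.rpow_lt_one hr.1.le hr.2 hq0
  have hd : 0 < 1 - r ^ q := by linarith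
  set y := r * (1 - r ^ q) ^ (-(1/q)) with hy
  have hy0 : 0 ≤ y := mul_nonneg hr.1.le (Real.rpow_nonneg hd.le _)
  have hyq : 1 + y ^ q = (1 - r ^ q)⁻¹ := by
    rw [hy, Real.mul_rpow hr.1.le (Real.rpow_nonneg hd.le _), ← Real.rpow_mul hd.le,
      show -(1/q) * q = -1 by field_simp, Real.rpow_neg_one]
    field_simp
    ring
  have hbound := mul_one_add_rpow_le_arsinhPQ p q hp hq hy0
  rw [hyq, Real.inv_rpow hd.le, hy, mul_assoc,
    mul_inv_cancel₀ (Real.rpow_pos_of_pos hd _).ne', mul_one, ← hy] at hbound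
  have hcont : ContinuousOn (arsinhPQ p q) (Icc 0 y) := by
    rw [← uIcc_of_le hy0]
    refine intervalIntegral.continuousOn_primitive_interval ?_
    rw [uIcc_of_le hy0]
    exact ((arsinhPQ_integrand_continuousOn p q hq0).mono fun _ ht => ht.1).integrableOn_Icc
  obtain ⟨x, hx, hxr⟩ := intermediate_value_Icc hy0 hcont
    ⟨(arsinhPQ_zero p q).trans_le hr.1.le, hbound⟩
  exact ⟨x, hx.1, hxr⟩

/-- Minkowski's inequality for the power mean of two affine values. -/
lemma powerMean_add_mul_le {a b c x y : ℝ} (ha : 1 ≤ a) (hb : 0 ≤ b) (hc : 0 ≤ c)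
    (hx : 0 ≤ x) (hy : 0 ≤ y) :
    (((b + c * x) ^ a + (b + c * y) ^ a) / 2) ^ (1/a) ≤
      b + c * ((x ^ a + y ^ a) / 2) ^ (1/a) := by
  have ha0 : a ≠ 0 := by linarith
  have hxa := Real.rpow_nonneg hx a
  have hya := Real.rpow_nonneg hy a
  have h2 : (0:ℝ) ≤ 1/2 := by norm_num
  have hw : (0:ℝ) ≤ (1/2) ^ (1/a) := by positivity
  have hwa : (((1:ℝ)/2) ^ (1/a)) ^ a = 1/2 := by
    rw [← Real.rpow_mul h2, one_div_mul_cancel ha0, Real.rpow_one]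
  set w : ℝ := (1/2) ^ (1/a)
  have h := Real.Lp_add_le_of_nonneg (Finset.univ : Finset (Fin 2)) (p := a)
    (f := fun _ => w * b) (g := ![w * (c * x), w * (c * y)]) ha
    (fun _ _ => by positivity) (fun i _ => by fin_cases i <;> simp <;> positivity)
  simp only [Fin.sum_univ_two, Matrix.cons_val_zero, Matrix.cons_val_one, ← mul_add] at h
  rw [Real.mul_rpow hw (by positivity), Real.mul_rpow hw (by positivity), Real.mul_rpow hw hb,
    Real.mul_rpow hw (by positivity), Real.mul_rpow hw (by positivity), hwa,
    Real.mul_rpow hc hx, Real.mul_rpow hc hy,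
    show (1:ℝ)/2 * b ^ a + 1/2 * b ^ a = b ^ a by ring,
    ← Real.rpow_mul hb, mul_one_div_cancel ha0, Real.rpow_one,
    show (1:ℝ)/2 * (c ^ a * x ^ a) + 1/2 * (c ^ a * y ^ a) = c ^ a * ((x ^ a + y ^ a) / 2) by ring,
    Real.mul_rpow (Real.rpow_nonneg hc a) (by positivity), ← Real.rpow_mul hc,
    mul_one_div_cancel ha0, Real.rpow_one] at h
  convert h using 2
  ring

/-- `arsinhPQ p q` is `(a,a)`-concave on `[0,∞)`. -/
lemma powerMean_arsinhPQ_le (p q a : ℝ) (hp : 0 < p) (hq : 0 < q) (ha : 1 ≤ a) {x y : ℝ}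
    (hx : 0 ≤ x) (hy : 0 ≤ y) :
    ((arsinhPQ p q x ^ a + arsinhPQ p q y ^ a) / 2) ^ (1/a) ≤
      arsinhPQ p q (((x ^ a + y ^ a) / 2) ^ (1/a)) := by
  have hxa := Real.rpow_nonneg hx a
  have hya := Real.rpow_nonneg hy a
  have hm : 0 ≤ ((x ^ a + y ^ a) / 2) ^ (1/a) := by positivity
  set m := ((x ^ a + y ^ a) / 2) ^ (1/a) with hmdef
  have hmq := Real.rpow_nonneg hm q
  have hc : 0 ≤ (1 + m ^ q) ^ (-(1/p)) := by positivity
  have tangent := fun {z : ℝ} (hz : 0 ≤ z) => arsinhPQ_le_tangent p q hp hq hm hz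
  set c := (1 + m ^ q) ^ (-(1/p))
  have nonneg := fun {z : ℝ} (hz : 0 ≤ z) => (arsinhPQ_zero p q).symm.trans_le
    ((arsinhPQ_strictMonoOn p q hp hq).monotoneOn self_mem_Ici hz hz)
  have h0 := tangent le_rfl
  rw [arsinhPQ_zero] at h0
  have hmink := powerMean_add_mul_le (b := arsinhPQ p q m - c * m) ha (by linarith) hc hx hy
  rw [← hmdef, sub_add_cancel] at hmink
  refine le_trans ?_ hmink
  have hgx := nonneg hx
  have hgy := nonneg hy
  have htx : arsinhPQ p q x ≤ arsinhPQ p q m - c * m + c * x := by linarith [tangent hx]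
  have hty : arsinhPQ p q y ≤ arsinhPQ p q m - c * m + c * y := by linarith [tangent hy]
  have ha0 : 0 ≤ a := by linarith
  gcongr

theorem sinhPQ_aa_convex (p q a : ℝ) (hp : 1 < p) (hq : 1 < q) (ha : 1 ≤ a)
    (r s : ℝ) (hr : r ∈ Set.Ioo (0:ℝ) 1) (hs : s ∈ Set.Ioo (0:ℝ) 1) :
    sinhPQ p q (((r ^ a + s ^ a) / 2) ^ (1/a)) ≤
      ((sinhPQ p q r ^ a + sinhPQ p q s ^ a) / 2) ^ (1/a) := by
  have hp0 : 0 < p := by linarith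
  have hq0 : 0 < q := by linarith
  have ha0 : 0 < a := by linarith
  have hra := Real.rpow_pos_of_pos hr.1 a
  have hsa := Real.rpow_pos_of_pos hs.1 a
  have hra1 := Real.rpow_lt_one hr.1.le hr.2 ha0
  have hsa1 := Real.rpow_lt_one hs.1.le hs.2 ha0
  have hmean : ((r ^ a + s ^ a) / 2) ^ (1/a) ∈ Ioo (0:ℝ) 1 :=
    ⟨by positivity, Real.rpow_lt_one (by positivity) (by linarith) (by positivity)⟩
  have mem := fun {t : ℝ} (ht : t ∈ Ioo (0:ℝ) 1) =>
    Function.invFunOn_mem (exists_arsinhPQ_eq p q hp hq ht)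
  have eq := fun {t : ℝ} (ht : t ∈ Ioo (0:ℝ) 1) =>
    Function.invFunOn_eq (exists_arsinhPQ_eq p q hp hq ht)
  have h := powerMean_arsinhPQ_le p q a hp0 hq0 ha (mem hr) (mem hs)
  rw [eq hr, eq hs, ← eq hmean] at h
  have hra' := Real.rpow_nonneg (mem hr) a
  have hsa' := Real.rpow_nonneg (mem hs) a
  exact ((arsinhPQ_strictMonoOn p q hp0 hq0).le_iff_le (mem hmean)
    (mem_Ici.2 (by positivity))).1 h
end

section
/- Let p, q > 1, a ≤ 0 and b ≥ 0. Then the function x ↦ π_{p,q}/2 − arccos_{p,q}(x) is (a,b)-convex on (0,1): for all r, s ∈ (0,1), π_{p,q}/2 − arccos_{p,q}(M_a(r,s)) ≤ M_b(π_{p,q}/2 − arccos_{p,q}(r), π_{p,q}/2 − arccos_{p,q}(s)). -/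
open Real Set

/-- `arccosPQ p q x = arcsinPQ p q ((1 - x^p)^(1/q))`. -/
noncomputable def arccosPQ (p q x : ℝ) : ℝ := arcsinPQ p q ((1 - x ^ p) ^ (1/q))

/-- The power mean `M_a(x,y)`: `((x^a + y^a)/2)^(1/a)` for `a ≠ 0` and `√(xy)` for `a = 0`. -/
noncomputable def powerMean (a x y : ℝ) : ℝ :=
  if a = 0 then Real.sqrt (x * y) else ((x ^ a + y ^ a) / 2) ^ (1/a)

/-- `x ↦ π_{p,q}/2 - arccos_{p,q}(x)`. -/
noncomputable def coArccosPQ (p q x : ℝ) : ℝ := arcsinPQ p q 1 - arccosPQ p q x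

/-- The derivative of `coArccosPQ p q` on `(0,1)`. -/
noncomputable def coArccosPQDeriv (p q x : ℝ) : ℝ :=
  p / q * (x ^ (p - 2) * (1 - x ^ p) ^ (1 / q - 1))

lemma measurable_arcsinPQ_integrand (p q : ℝ) :
    Measurable fun t : ℝ => (1 - t ^ q) ^ (-(1 / p)) := by
  fun_prop

lemma intervalIntegrable_arcsinPQ_integrand {p q : ℝ} (hp : 1 < p) (hq : 1 < q) :
    IntervalIntegrable (fun t : ℝ => (1 - t ^ q) ^ (-(1 / p))) MeasureTheory.volume 0 1 := by
  have hp1 : (1 : ℝ) / p < 1 := by rw [div_lt_one] <;> linarith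
  have hdom : IntervalIntegrable (fun t : ℝ => (1 - t) ^ (-(1 / p))) MeasureTheory.volume 0 1 := by
    have h := (intervalIntegral.intervalIntegrable_rpow' (a := 0) (b := 1)
      (r := -(1 / p)) (by linarith)).comp_sub_left 1
    simpa using h.symm
  refine hdom.mono_fun (measurable_arcsinPQ_integrand p q).aestronglyMeasurable ?_
  rw [Set.uIoc_of_le zero_le_one]
  filter_upwards [MeasureTheory.ae_restrict_mem measurableSet_Ioc] with t ht
  rcases ht.2.eq_or_lt with rfl | ht1
  · simp
  have htq : t ^ q ≤ t := by
    simpa using Real.rpow_le_rpow_of_exponent_ge ht.1 ht.2 hq.le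
  have hbase : 0 < 1 - t := by linarith
  rw [Real.norm_of_nonneg (Real.rpow_nonneg (by linarith) _),
    Real.norm_of_nonneg (Real.rpow_nonneg hbase.le _)]
  refine Real.rpow_le_rpow_of_nonpos hbase (by linarith) ?_
  have : 0 < 1 / p := by positivity
  linarith

lemma coArccosPQ_zero {p q : ℝ} (hp : 1 < p) : coArccosPQ p q 0 = 0 := by
  simp [coArccosPQ, arccosPQ, Real.zero_rpow (by linarith : p ≠ 0)]

lemma continuousOn_coArccosPQ {p q : ℝ} (hp : 1 < p) (hq : 1 < q) :
    ContinuousOn (coArccosPQ p q) (Icc 0 1) := by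
  have hF : ContinuousOn (arcsinPQ p q) (Icc 0 1) := by
    have h := intervalIntegral.continuousOn_primitive_interval'
      (intervalIntegrable_arcsinPQ_integrand hp hq) (a := 0) (by simp)
    rwa [Set.uIcc_of_le zero_le_one] at h
  refine continuousOn_const.sub (hF.comp ?_ ?_)
  · refine ContinuousOn.rpow_const ?_ fun x _ => Or.inr (by positivity)
    exact continuousOn_const.sub
      (continuousOn_id.rpow_const fun x _ => Or.inr (by linarith))
  · intro x hx
    have h0 : 0 ≤ x ^ p := Real.rpow_nonneg hx.1 _
    have h1 : x ^ p ≤ 1 := Real.rpow_le_one hx.1 hx.2 (by linarith)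
    exact ⟨Real.rpow_nonneg (by linarith) _,
      Real.rpow_le_one (by linarith) (by linarith) (by positivity)⟩

lemma hasDerivAt_coArccosPQ {p q x : ℝ} (hp : 1 < p) (hq : 1 < q) (hx : x ∈ Ioo (0 : ℝ) 1) :
    HasDerivAt (coArccosPQ p q) (coArccosPQDeriv p q x) x := by
  have hxp0 : 0 < x ^ p := Real.rpow_pos_of_pos hx.1 _
  have hxp1 : x ^ p < 1 := Real.rpow_lt_one hx.1.le hx.2 (by linarith)
  have hbase : 0 < 1 - x ^ p := by linarith
  set u := (1 - x ^ p) ^ (1 / q) with hu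
  have hu0 : 0 < u := Real.rpow_pos_of_pos hbase _
  have hu1 : u < 1 := Real.rpow_lt_one hbase.le (by linarith) (by positivity)
  have huq : 1 - u ^ q = x ^ p := by
    rw [hu, ← Real.rpow_mul hbase.le, one_div_mul_cancel (by linarith), Real.rpow_one]
    ring
  have hfu : (1 - u ^ q) ^ (-(1 / p)) = x⁻¹ := by
    rw [huq, ← Real.rpow_mul hx.1.le, mul_neg, mul_one_div_cancel (by linarith),
      Real.rpow_neg_one]
  have hcont : ContinuousAt (fun t : ℝ => (1 - t ^ q) ^ (-(1 / p))) u := by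
    refine ContinuousAt.rpow_const ?_ (Or.inl (by rw [huq]; exact hxp0.ne'))
    exact continuousAt_const.sub (continuousAt_id.rpow_const (Or.inl hu0.ne'))
  have hint : IntervalIntegrable (fun t : ℝ => (1 - t ^ q) ^ (-(1 / p)))
      MeasureTheory.volume 0 u := by
    refine (intervalIntegrable_arcsinPQ_integrand hp hq).mono_set ?_
    rw [Set.uIcc_of_le hu0.le, Set.uIcc_of_le zero_le_one]
    exact Icc_subset_Icc_right hu1.le
  have hF : HasDerivAt (arcsinPQ p q) x⁻¹ u := by
    rw [← hfu]
    exact intervalIntegral.integral_hasDerivAt_right hint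
      (measurable_arcsinPQ_integrand p q).stronglyMeasurable.stronglyMeasurableAtFilter hcont
  have hinner : HasDerivAt (fun y : ℝ => (1 - y ^ p) ^ (1 / q))
      (-(p * x ^ (p - 1)) * (1 / q) * (1 - x ^ p) ^ (1 / q - 1)) x :=
    ((Real.hasDerivAt_rpow_const (Or.inl hx.1.ne')).const_sub 1).rpow_const (Or.inl hbase.ne')
  refine ((HasDerivAt.comp x hF hinner).const_sub (arcsinPQ p q 1)).congr_deriv ?_
  have hsplit : x ^ (p - 1) = x ^ (p - 2) * x := by
    rw [← Real.rpow_add_one hx.1.ne']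
    ring_nf
  have hx0 := hx.1.ne'
  rw [coArccosPQDeriv, hsplit]
  field_simp

lemma coArccosPQDeriv_pos {p q x : ℝ} (hp : 1 < p) (hq : 1 < q) (hx : x ∈ Ioo (0 : ℝ) 1) :
    0 < coArccosPQDeriv p q x := by
  have hbase : 0 < 1 - x ^ p := by
    linarith [Real.rpow_lt_one hx.1.le hx.2 (by linarith : 0 < p)]
  have := hx.1
  unfold coArccosPQDeriv
  positivity

lemma strictMonoOn_coArccosPQ {p q : ℝ} (hp : 1 < p) (hq : 1 < q) :
    StrictMonoOn (coArccosPQ p q) (Icc 0 1) := by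
  refine strictMonoOn_of_deriv_pos (convex_Icc 0 1) (continuousOn_coArccosPQ hp hq) ?_
  intro x hx
  rw [interior_Icc] at hx
  rw [(hasDerivAt_coArccosPQ hp hq hx).deriv]
  exact coArccosPQDeriv_pos hp hq hx

lemma coArccosPQ_pos {p q x : ℝ} (hp : 1 < p) (hq : 1 < q) (hx : x ∈ Ioo (0 : ℝ) 1) :
    0 < coArccosPQ p q x := by
  have h := strictMonoOn_coArccosPQ hp hq (left_mem_Icc.2 zero_le_one)
    (Ioo_subset_Icc_self hx) hx.1
  rwa [coArccosPQ_zero hp] at h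

/-- The derivative of `coArccosPQ` is midpoint convex with respect to geometric means. -/
lemma coArccosPQDeriv_sq_le {p q x y z : ℝ} (hp : 1 < p) (hq : 1 < q)
    (hx : x ∈ Ioo (0 : ℝ) 1) (hy : y ∈ Ioo (0 : ℝ) 1) (hz : z ∈ Ioo (0 : ℝ) 1)
    (hxy : z * z = x * y) :
    coArccosPQDeriv p q z * coArccosPQDeriv p q z ≤
      coArccosPQDeriv p q x * coArccosPQDeriv p q y := by
  have hbase : ∀ {w : ℝ}, w ∈ Ioo (0 : ℝ) 1 → 0 < 1 - w ^ p := fun hw => by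
    linarith [Real.rpow_lt_one hw.1.le hw.2 (by linarith : 0 < p)]
  have hpow : ∀ e : ℝ, z ^ e * z ^ e = x ^ e * y ^ e := fun e => by
    rw [← Real.mul_rpow hz.1.le hz.1.le, hxy, Real.mul_rpow hx.1.le hy.1.le]
  have hsum : 2 * z ^ p ≤ x ^ p + y ^ p := by
    have hxp := Real.rpow_pos_of_pos hx.1 p
    have hyp := Real.rpow_pos_of_pos hy.1 p
    refine abs_le_of_sq_le_sq' ?_ (by positivity) |>.2
    nlinarith [hpow p, sq_nonneg (x ^ p - y ^ p)]
  have hprod : (1 - x ^ p) * (1 - y ^ p) ≤ (1 - z ^ p) * (1 - z ^ p) := by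
    nlinarith [hpow p]
  have hq1 : 1 / q - 1 ≤ 0 := by
    rw [sub_nonpos, div_le_one] <;> linarith
  have hmain : ((1 - z ^ p) ^ (1 / q - 1)) * ((1 - z ^ p) ^ (1 / q - 1)) ≤
      ((1 - x ^ p) ^ (1 / q - 1)) * ((1 - y ^ p) ^ (1 / q - 1)) := by
    rw [← Real.mul_rpow (hbase hz).le (hbase hz).le, ← Real.mul_rpow (hbase hx).le (hbase hy).le]
    exact Real.rpow_le_rpow_of_nonpos (mul_pos (hbase hx) (hbase hy)) hprod hq1
  have hcoef : 0 ≤ (p / q) ^ 2 * (x ^ (p - 2) * y ^ (p - 2)) := by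
    have := Real.rpow_pos_of_pos hx.1 (p - 2)
    have := Real.rpow_pos_of_pos hy.1 (p - 2)
    positivity
  calc coArccosPQDeriv p q z * coArccosPQDeriv p q z
      = (p / q) ^ 2 * (z ^ (p - 2) * z ^ (p - 2)) *
        ((1 - z ^ p) ^ (1 / q - 1) * (1 - z ^ p) ^ (1 / q - 1)) := by
          unfold coArccosPQDeriv; ring
    _ ≤ (p / q) ^ 2 * (x ^ (p - 2) * y ^ (p - 2)) *
        ((1 - x ^ p) ^ (1 / q - 1) * (1 - y ^ p) ^ (1 / q - 1)) := by
          rw [hpow]; exact mul_le_mul_of_nonneg_left hmain hcoef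
    _ = coArccosPQDeriv p q x * coArccosPQDeriv p q y := by
          unfold coArccosPQDeriv; ring

lemma two_mul_le_add_of_mul_self_le {A B C c : ℝ} (hA : 0 ≤ A) (hB : 0 ≤ B) (hc : 0 < c)
    (h : C * C ≤ A * B) : 2 * C ≤ c * A + c⁻¹ * B := by
  have hcc : c * c⁻¹ = 1 := mul_inv_cancel₀ hc.ne'
  refine abs_le_of_sq_le_sq' ?_ (by positivity) |>.2
  have hAB : (c * A) * (c⁻¹ * B) = A * B := by
    rw [mul_mul_mul_comm, hcc, one_mul]
  nlinarith [sq_nonneg (c * A - c⁻¹ * B)]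

lemma two_mul_coArccosPQ_le {p q r s m c : ℝ} (hp : 1 < p) (hq : 1 < q)
    (hr : r ∈ Ioo (0 : ℝ) 1) (hs : s ∈ Ioo (0 : ℝ) 1) (hm : m ∈ Ioo (0 : ℝ) 1)
    (hrs : m * m = r * s) (hc : 0 < c) :
    2 * coArccosPQ p q m ≤ c * coArccosPQ p q r + c⁻¹ * coArccosPQ p q s := by
  set D : ℝ → ℝ := fun t => c * coArccosPQ p q (r * t) + c⁻¹ * coArccosPQ p q (s * t)
    - 2 * coArccosPQ p q (m * t) with hD
  have hscale : ∀ {w t : ℝ}, w ∈ Ioo (0 : ℝ) 1 → t ∈ Ioo (0 : ℝ) 1 → w * t ∈ Ioo (0 : ℝ) 1 :=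
    fun hw ht => ⟨mul_pos hw.1 ht.1, mul_lt_one_of_nonneg_of_lt_one_left hw.1.le hw.2 ht.2.le⟩
  have hcont : ∀ {w : ℝ}, w ∈ Ioo (0 : ℝ) 1 →
      ContinuousOn (fun t => coArccosPQ p q (w * t)) (Icc 0 1) := fun {w} hw =>
    (continuousOn_coArccosPQ hp hq).comp (by fun_prop) fun t ht =>
      ⟨mul_nonneg hw.1.le ht.1, mul_le_one₀ hw.2.le ht.1 ht.2⟩
  have hderiv : ∀ {w t : ℝ}, w ∈ Ioo (0 : ℝ) 1 → t ∈ Ioo (0 : ℝ) 1 →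
      HasDerivAt (fun t => coArccosPQ p q (w * t)) (w * coArccosPQDeriv p q (w * t)) t :=
    fun {w t} hw ht => by
      have h := HasDerivAt.comp t (hasDerivAt_coArccosPQ hp hq (hscale hw ht))
        ((hasDerivAt_id t).const_mul w)
      exact h.congr_deriv (by ring)
  have hmono : MonotoneOn D (Icc 0 1) := by
    refine monotoneOn_of_hasDerivWithinAt_nonneg (convex_Icc 0 1)
      (f' := fun t => c * (r * coArccosPQDeriv p q (r * t)) +
        c⁻¹ * (s * coArccosPQDeriv p q (s * t)) - 2 * (m * coArccosPQDeriv p q (m * t)))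
      (((continuousOn_const.mul (hcont hr)).add (continuousOn_const.mul (hcont hs))).sub
        (continuousOn_const.mul (hcont hm))) ?_ ?_
    · intro t ht
      rw [interior_Icc] at ht ⊢
      exact ((((hderiv hr ht).const_mul c).add ((hderiv hs ht).const_mul c⁻¹)).sub
        ((hderiv hm ht).const_mul 2)).hasDerivWithinAt
    · intro t ht
      rw [interior_Icc] at ht
      have hrt := hscale hr ht
      have hst := hscale hs ht
      have hsq := coArccosPQDeriv_sq_le hp hq hrt hst (hscale hm ht)
        (by linear_combination t * t * hrs)
      refine sub_nonneg.2 (two_mul_le_add_of_mul_self_le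
        (mul_nonneg hr.1.le (coArccosPQDeriv_pos hp hq hrt).le)
        (mul_nonneg hs.1.le (coArccosPQDeriv_pos hp hq hst).le) hc ?_)
      rw [mul_mul_mul_comm m, hrs, mul_mul_mul_comm r (coArccosPQDeriv p q (r * t))]
      exact mul_le_mul_of_nonneg_left hsq (mul_nonneg hr.1.le hs.1.le)
  have h := hmono (left_mem_Icc.2 zero_le_one) (right_mem_Icc.2 zero_le_one) zero_le_one
  simp only [hD, mul_zero, mul_one, coArccosPQ_zero hp] at h
  linarith

lemma sqrt_mul_mem_Ioo {r s : ℝ} (hr : r ∈ Ioo (0 : ℝ) 1) (hs : s ∈ Ioo (0 : ℝ) 1) :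
    √(r * s) ∈ Ioo (0 : ℝ) 1 := by
  refine ⟨Real.sqrt_pos.2 (mul_pos hr.1 hs.1), ?_⟩
  rw [Real.sqrt_lt' one_pos, one_pow]
  exact mul_lt_one_of_nonneg_of_lt_one_left hr.1.le hr.2 hs.2.le

/-- `coArccosPQ` is convex with respect to geometric means. -/
lemma coArccosPQ_sqrt_mul_le {p q r s : ℝ} (hp : 1 < p) (hq : 1 < q)
    (hr : r ∈ Ioo (0 : ℝ) 1) (hs : s ∈ Ioo (0 : ℝ) 1) :
    coArccosPQ p q √(r * s) ≤ √(coArccosPQ p q r * coArccosPQ p q s) := by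
  have hA := coArccosPQ_pos hp hq hr
  have hB := coArccosPQ_pos hp hq hs
  set A := coArccosPQ p q r
  set B := coArccosPQ p q s
  have hA' : 0 < √A := Real.sqrt_pos.2 hA
  have hB' : 0 < √B := Real.sqrt_pos.2 hB
  have h := two_mul_coArccosPQ_le hp hq hr hs (sqrt_mul_mem_Ioo hr hs)
    (Real.mul_self_sqrt (mul_pos hr.1 hs.1).le) (div_pos hB' hA')
  have h1 : √B / √A * A = √A * √B := by
    nth_rewrite 2 [← Real.mul_self_sqrt hA.le]
    field_simp
  have h2 : (√B / √A)⁻¹ * B = √A * √B := by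
    nth_rewrite 2 [← Real.mul_self_sqrt hB.le]
    field_simp
  rw [Real.sqrt_mul hA.le]
  change 2 * _ ≤ √B / √A * A + (√B / √A)⁻¹ * B at h
  linarith

lemma sqrt_mul_rpow_le {x y : ℝ} (hx : 0 < x) (hy : 0 < y) (c : ℝ) :
    √(x * y) ^ c ≤ (x ^ c + y ^ c) / 2 := by
  have hxc := Real.rpow_pos_of_pos hx c
  have hyc := Real.rpow_pos_of_pos hy c
  have hsq : √(x * y) ^ c * √(x * y) ^ c = x ^ c * y ^ c := by
    rw [← Real.mul_rpow (Real.sqrt_nonneg _) (Real.sqrt_nonneg _),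
      Real.mul_self_sqrt (mul_pos hx hy).le, Real.mul_rpow hx.le hy.le]
  have h := two_mul_le_add_of_mul_self_le hxc.le hyc.le one_pos hsq.le
  rw [inv_one, one_mul, one_mul] at h
  linarith

lemma rpow_rpow_one_div {x c : ℝ} (hx : 0 ≤ x) (hc : c ≠ 0) : (x ^ c) ^ (1 / c) = x := by
  rw [← Real.rpow_mul hx, mul_one_div_cancel hc, Real.rpow_one]

lemma powerMean_pos {x y : ℝ} (hx : 0 < x) (hy : 0 < y) (a : ℝ) : 0 < powerMean a x y := by
  unfold powerMean
  split_ifs <;> positivity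

lemma powerMean_le_sqrt_mul {x y a : ℝ} (hx : 0 < x) (hy : 0 < y) (ha : a ≤ 0) :
    powerMean a x y ≤ √(x * y) := by
  unfold powerMean
  split_ifs with h
  · exact le_rfl
  have hpos : 0 < √(x * y) := Real.sqrt_pos.2 (mul_pos hx hy)
  calc ((x ^ a + y ^ a) / 2) ^ (1 / a) ≤ (√(x * y) ^ a) ^ (1 / a) :=
        Real.rpow_le_rpow_of_nonpos (Real.rpow_pos_of_pos hpos _) (sqrt_mul_rpow_le hx hy a)
          (one_div_nonpos.2 ha)
    _ = √(x * y) := rpow_rpow_one_div hpos.le h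

lemma sqrt_mul_le_powerMean {x y b : ℝ} (hx : 0 < x) (hy : 0 < y) (hb : 0 ≤ b) :
    √(x * y) ≤ powerMean b x y := by
  unfold powerMean
  split_ifs with h
  · exact le_rfl
  calc √(x * y) = (√(x * y) ^ b) ^ (1 / b) := (rpow_rpow_one_div (Real.sqrt_nonneg _) h).symm
    _ ≤ ((x ^ b + y ^ b) / 2) ^ (1 / b) :=
        Real.rpow_le_rpow (Real.rpow_nonneg (Real.sqrt_nonneg _) _) (sqrt_mul_rpow_le hx hy b)
          (one_div_nonneg.2 hb)

theorem pi_sub_arccosPQ_ab_convex' (p q a b : ℝ) (hp : 1 < p) (hq : 1 < q)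
    (ha : a ≤ 0) (hb : 0 ≤ b)
    (r s : ℝ) (hr : r ∈ Set.Ioo (0:ℝ) 1) (hs : s ∈ Set.Ioo (0:ℝ) 1) :
    arcsinPQ p q 1 - arccosPQ p q (powerMean a r s) ≤
      powerMean b (arcsinPQ p q 1 - arccosPQ p q r) (arcsinPQ p q 1 - arccosPQ p q s) := by
  have hle := powerMean_le_sqrt_mul hr.1 hs.1 ha
  have hm := sqrt_mul_mem_Ioo hr hs
  calc coArccosPQ p q (powerMean a r s) ≤ coArccosPQ p q √(r * s) :=
        (strictMonoOn_coArccosPQ hp hq).monotoneOn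
          ⟨(powerMean_pos hr.1 hs.1 a).le, hle.trans hm.2.le⟩ (Ioo_subset_Icc_self hm) hle
    _ ≤ √(coArccosPQ p q r * coArccosPQ p q s) := coArccosPQ_sqrt_mul_le hp hq hr hs
    _ ≤ powerMean b (coArccosPQ p q r) (coArccosPQ p q s) :=
        sqrt_mul_le_powerMean (coArccosPQ_pos hp hq hr) (coArccosPQ_pos hp hq hs) hb
end

section
/- Let p, q > 1 and a ≥ 0. Then the function g : (0,∞) → ℝ defined by g(x) = (arsinh_{p,q}(x)/x)^a · (1 + x^q)^{-1/p} is decreasing on (0,∞). -/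
open Real Set

/-- The density `t ↦ (1 + tᵠ)^(-1/p)` is decreasing on `[0, ∞)`. -/
theorem antitoneOn_one_add_rpow_rpow_neg {p q : ℝ} (hp : 0 ≤ p) (hq : 0 ≤ q) :
    AntitoneOn (fun t : ℝ => (1 + t ^ q) ^ (-(1/p))) (Set.Ici 0) := by
  intro x hx y _ hxy
  have hx0 : (0:ℝ) ≤ x := hx
  have hpos : 0 < 1 + x ^ q := by positivity
  refine Real.rpow_le_rpow_of_nonpos hpos ?_ (neg_nonpos.2 (by positivity))
  gcongr

/-- `arsinhPQ p q x / x` is the mean of the density over `[0, x]`. -/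
theorem arsinhPQ_div_self (p q : ℝ) {x : ℝ} (hx : x ≠ 0) :
    arsinhPQ p q x / x = ∫ s in (0:ℝ)..1, (1 + (x * s) ^ q) ^ (-(1/p)) := by
  have h := intervalIntegral.integral_comp_mul_left (a := 0) (b := 1)
    (fun t : ℝ => (1 + t ^ q) ^ (-(1/p))) hx
  rw [h, mul_zero, mul_one, smul_eq_mul, arsinhPQ, div_eq_inv_mul]

theorem antitoneOn_arsinhPQ_div_self {p q : ℝ} (hp : 0 ≤ p) (hq : 0 ≤ q) :
    AntitoneOn (fun x => arsinhPQ p q x / x) (Set.Ioi 0) := by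
  have hf := antitoneOn_one_add_rpow_rpow_neg hp hq
  have hint : ∀ x : ℝ, 0 < x → IntervalIntegrable
      (fun s : ℝ => (1 + (x * s) ^ q) ^ (-(1/p))) MeasureTheory.volume 0 1 := by
    intro x hx
    refine AntitoneOn.intervalIntegrable fun s hs t ht hst => ?_
    rw [Set.uIcc_of_le zero_le_one] at hs ht
    exact hf (mul_nonneg hx.le hs.1) (mul_nonneg hx.le ht.1)
      (mul_le_mul_of_nonneg_left hst hx.le)
  intro x hx y hy hxy
  have hx0 : (0:ℝ) < x := hx
  have hy0 : (0:ℝ) < y := hy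
  simp only [arsinhPQ_div_self p q hx0.ne', arsinhPQ_div_self p q hy0.ne']
  refine intervalIntegral.integral_mono_on zero_le_one (hint y hy0) (hint x hx0) fun s hs => ?_
  exact hf (mul_nonneg hx0.le hs.1) (mul_nonneg hy0.le hs.1)
    (mul_le_mul_of_nonneg_right hxy hs.1)

theorem arsinhPQ_nonneg (p q : ℝ) {x : ℝ} (hx : 0 ≤ x) : 0 ≤ arsinhPQ p q x := by
  refine intervalIntegral.integral_nonneg hx fun t ht => ?_
  have ht0 : 0 ≤ t := ht.1
  positivity

theorem arsinhPQ_aux_antitone (p q a : ℝ) (hp : 1 < p) (hq : 1 < q) (ha : 0 ≤ a) :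
    AntitoneOn (fun x => (arsinhPQ p q x / x) ^ a * (1 + x ^ q) ^ (-(1/p)))
      (Set.Ioi (0:ℝ)) := by
  have hp0 : 0 ≤ p := by linarith
  have hq0 : 0 ≤ q := by linarith
  intro x hx y hy hxy
  have hx0 : (0:ℝ) < x := hx
  have hy0 : (0:ℝ) < y := hy
  have hxn : 0 ≤ arsinhPQ p q x / x := div_nonneg (arsinhPQ_nonneg p q hx0.le) hx0.le
  have hyn : 0 ≤ arsinhPQ p q y / y := div_nonneg (arsinhPQ_nonneg p q hy0.le) hy0.le
  exact mul_le_mul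
    (Real.rpow_le_rpow hyn (antitoneOn_arsinhPQ_div_self hp0 hq0 hx hy hxy) ha)
    (antitoneOn_one_add_rpow_rpow_neg hp0 hq0 hx0.le hy0.le hxy)
    (by positivity) (by positivity)
end
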